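/- Sharkovsky's theorem: (1) If f : [0,1] → [0,1] is continuous, m ≻ n in the Sharkovsky ordering, and f has a periodic point of least period m, then f has a periodic point of least period n. (2) For every continuous f : [0,1] → [0,1] there exists k ∈ ℕ ∪ {2^∞} such that Per(f) = Sh(k). (3) Conversely, for every k ∈ ℕ ∪ {2^∞} there exists a continuous map f : [0,1] → [0,1] with Per(f) = Sh(k). -/

import Mathlib

open Set

noncomputable section

/-- The strict Sharkovsky ordering `m ≻ n` on positive integers: writing
`m = 2^a·b` and `n = 2^c·d` with `b, d` odd, either both are not powers of two
and `(a, b) < (c, d)` lexicographically, or `m` is not a power of two while `n`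
is, or both are powers of two and `m > n`. -/
def SharkGT (m n : ℕ) : Prop :=
  ∃ a b c d : ℕ, Odd b ∧ Odd d ∧ m = 2 ^ a * b ∧ n = 2 ^ c * d ∧
    ((1 < b ∧ 1 < d ∧ (a < c ∨ (a = c ∧ b < d))) ∨
     (1 < b ∧ d = 1) ∨
     (b = 1 ∧ d = 1 ∧ c < a))

/-- `Sh(k)` for `k ∈ ℕ ∪ {2^∞}` (with `none` playing the role of `2^∞`):
for `k ∈ ℕ` it is the set of all `m` with `k ≻ m` together with `k` itself,
and `Sh(2^∞)` is the set of all powers of `2`. -/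
def ShSet : Option ℕ → Set ℕ
  | some k => insert k {m | SharkGT k m}
  | none => {m | ∃ j : ℕ, m = 2 ^ j}

/-- `Per(f)`: the set of least periods of periodic points of `f : [0,1] → [0,1]`. -/
def PerSet (f : ℝ → ℝ) : Set ℕ :=
  {n | 0 < n ∧ ∃ x ∈ Set.Icc (0 : ℝ) 1,
    f^[n] x = x ∧ ∀ j : ℕ, 0 < j → j < n → f^[j] x ≠ x}

/-!
Let `a` be the least point of a cycle of length `m ≥ 3`. The intermediate value theorem yields
`a < y < v < z` with `f z = z`, `f (f v) = a` and `y` the last fixed point of `f ∘ f` before `v`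
(Du's argument). For odd `m`, the first fixed point of `f^[m + 2]` beyond `y` has least period
`m + 2`, and every even period is realized by a point between `a` and `y` whose orbit lies on
opposite sides of `z` at even and odd times. The rest of the ordering follows by passing from `f`
to `f ∘ f`.

For the converse, cut the tent map off at height `h`. The cycles of the truncation strictly below
`h` are the cycles of the tent map there, so if `h` is the least among the greatest points of the
tent cycles of length `m`, then `m` is the `≻`-greatest period that survives. The supremum of these
heights over the powers of two realizes `Sh(2^∞)`.
-/

open Function

section LeastPeriods

variable {α : Type*} {f : α → α} {m n : ℕ}

/-- The set of least periods of the periodic points of a self-map, i.e. `PerSet` for a map of an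
arbitrary type. Aperiodic points have `minimalPeriod` zero, which the condition `0 < n` removes. -/
def leastPeriods (f : α → α) : Set ℕ :=
  {n | 0 < n ∧ ∃ x, minimalPeriod f x = n}

lemma mem_leastPeriods_iff :
    n ∈ leastPeriods f ↔ 0 < n ∧ ∃ x, f^[n] x = x ∧ ∀ j, 0 < j → j < n → f^[j] x ≠ x := by
  refine and_congr_right fun hn => exists_congr fun x => ⟨?_, fun ⟨hper, hne⟩ => ?_⟩
  · rintro rfl
    exact ⟨iterate_minimalPeriod, fun j hj hlt =>
      not_isPeriodicPt_of_pos_of_lt_minimalPeriod hj.ne' hlt⟩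
  · have hper : IsPeriodicPt f n x := hper
    refine (hper.minimalPeriod_le hn).eq_of_not_lt fun hlt => ?_
    exact hne _ (hper.minimalPeriod_pos hn) hlt iterate_minimalPeriod

lemma perSet_eq_leastPeriods_restrict {f : ℝ → ℝ} (hf : MapsTo f (Icc 0 1) (Icc 0 1)) :
    PerSet f = leastPeriods (hf.restrict f _ _) := by
  ext n
  simp only [PerSet, mem_ofPred_eq, mem_leastPeriods_iff, hf.iterate_restrict, Subtype.ext_iff,
    Subtype.exists, MapsTo.val_restrict_apply, exists_prop, ne_eq]

lemma minimalPeriod_congr {g : α → α} {x : α} (h : ∀ i, f^[i] x = g^[i] x) :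
    minimalPeriod f x = minimalPeriod g x :=
  minimalPeriod_eq_minimalPeriod_iff.2 fun n => by simp only [IsPeriodicPt, IsFixedPt, h]

lemma div_gcd_mem_leastPeriods_iterate {k : ℕ} (hk : k ≠ 0) (hm : m ∈ leastPeriods f) :
    m / m.gcd k ∈ leastPeriods f^[k] := by
  obtain ⟨hpos, x, rfl⟩ := hm
  exact ⟨Nat.div_gcd_pos_of_pos_left _ hpos, x, minimalPeriod_iterate_eq_div_gcd hk⟩

lemma mem_leastPeriods_iterate_two (h : 2 * m ∈ leastPeriods f) : m ∈ leastPeriods f^[2] := by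
  have := div_gcd_mem_leastPeriods_iterate two_ne_zero h
  rwa [Nat.gcd_mul_right_left, Nat.mul_div_cancel_left _ two_pos] at this

lemma two_mul_mem_or_odd_mem_of_mem_iterate_two (h : n ∈ leastPeriods f^[2]) :
    2 * n ∈ leastPeriods f ∨ Odd n ∧ n ∈ leastPeriods f := by
  obtain ⟨hn, x, hx⟩ := h
  rw [minimalPeriod_iterate_eq_div_gcd two_ne_zero] at hx
  obtain heven | hodd := Nat.even_or_odd (minimalPeriod f x)
  · rw [Nat.gcd_eq_right heven.two_dvd] at hx
    exact .inl ⟨by positivity, x, by rw [← hx, Nat.mul_div_cancel' heven.two_dvd]⟩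
  · rw [hodd.coprime_two_right.gcd_eq_one, Nat.div_one] at hx
    exact .inr ⟨hx ▸ hodd, hn, x, hx⟩

lemma exists_isLeast_cycle [LinearOrder α] (hm : m ∈ leastPeriods f) :
    ∃ a, minimalPeriod f a = m ∧ ∀ i, a ≤ f^[i] a := by
  obtain ⟨hpos, x, rfl⟩ := hm
  obtain ⟨i, -, hmin⟩ := Finset.exists_min_image (Finset.range (minimalPeriod f x))
    (fun i => f^[i] x) (Finset.nonempty_range_iff.2 hpos.ne')
  refine ⟨f^[i] x, minimalPeriod_apply_iterate (minimalPeriod_pos_iff_mem_periodicPts.1 hpos) i,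
    fun j => ?_⟩
  rw [← iterate_add_apply, ← iterate_mod_minimalPeriod_eq (n := j + i)]
  exact hmin _ (Finset.mem_range.2 (Nat.mod_lt _ hpos))

lemma exists_isGreatest_cycle [LinearOrder α] (hm : m ∈ leastPeriods f) :
    ∃ a, minimalPeriod f a = m ∧ ∀ i, f^[i] a ≤ a :=
  exists_isLeast_cycle (α := αᵒᵈ) hm

end LeastPeriods

section SharkovskyOrder

variable {m n l : ℕ} {S : Set ℕ}

lemma two_pow_mul_odd_inj {a b c d : ℕ} (hb : Odd b) (hd : Odd d) :
    2 ^ a * b = 2 ^ c * d ↔ a = c ∧ b = d := by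
  refine ⟨fun h => ?_, fun ⟨hac, hbd⟩ => by rw [hac, hbd]⟩
  have hle {a b c d : ℕ} (hd : Odd d) (h : 2 ^ a * b = 2 ^ c * d) : a ≤ c :=
    (Nat.pow_dvd_pow_iff_le_right one_lt_two).1
      ((hd.coprime_two_left.pow_left a).dvd_of_dvd_mul_right ⟨b, h.symm⟩)
  obtain rfl := (hle hd h).antisymm (hle hb h.symm)
  exact ⟨rfl, Nat.eq_of_mul_eq_mul_left (by positivity) h⟩

lemma sharkGT_two_pow_mul_iff {a b c d : ℕ} (hb : Odd b) (hd : Odd d) :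
    SharkGT (2 ^ a * b) (2 ^ c * d) ↔
      (1 < b ∧ 1 < d ∧ (a < c ∨ (a = c ∧ b < d))) ∨ (1 < b ∧ d = 1) ∨ (b = 1 ∧ d = 1 ∧ c < a) := by
  refine ⟨?_, fun h => ⟨a, b, c, d, hb, hd, rfl, rfl, h⟩⟩
  rintro ⟨a', b', c', d', hb', hd', hm, hn, h⟩
  obtain ⟨rfl, rfl⟩ := (two_pow_mul_odd_inj hb hb').1 hm
  obtain ⟨rfl, rfl⟩ := (two_pow_mul_odd_inj hd hd').1 hn
  exact h

lemma sharkGT_two_pow_iff {i j : ℕ} : SharkGT (2 ^ i) (2 ^ j) ↔ j < i := by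
  simpa using sharkGT_two_pow_mul_iff (a := i) (c := j) odd_one odd_one

lemma SharkGT.pos_left (h : SharkGT m n) : 0 < m := by
  obtain ⟨a, b, -, -, hb, -, rfl, -⟩ := h
  exact Nat.mul_pos (by positivity) hb.pos

lemma SharkGT.irrefl (m : ℕ) : ¬ SharkGT m m := by
  rintro ⟨a, b, c, d, hb, hd, rfl, h, hcase⟩
  obtain ⟨rfl, rfl⟩ := (two_pow_mul_odd_inj hb hd).1 h
  omega

lemma sharkGT_trichotomy (hm : 0 < m) (hn : 0 < n) : SharkGT m n ∨ m = n ∨ SharkGT n m := by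
  obtain ⟨a, b, hb, rfl⟩ := Nat.exists_eq_two_pow_mul_odd hm.ne'
  obtain ⟨c, d, hd, rfl⟩ := Nat.exists_eq_two_pow_mul_odd hn.ne'
  rw [sharkGT_two_pow_mul_iff hb hd, sharkGT_two_pow_mul_iff hd hb, two_pow_mul_odd_inj hb hd]
  have := hb.pos
  have := hd.pos
  omega

lemma eq_three_or_three_sharkGT (hn : 0 < n) : n = 3 ∨ SharkGT 3 n := by
  obtain ⟨c, d, hd, rfl⟩ := Nat.exists_eq_two_pow_mul_odd hn.ne'
  have odd_three : Odd 3 := by decide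
  have heq := two_pow_mul_odd_inj (a := c) (c := 0) hd odd_three
  have hgt := sharkGT_two_pow_mul_iff (a := 0) (c := c) odd_three hd
  rw [pow_zero, one_mul] at heq hgt
  rw [heq, hgt]
  grind

lemma three_sharkGT_two_pow (j : ℕ) : SharkGT 3 (2 ^ j) :=
  ⟨0, 3, j, 1, by decide, odd_one, rfl, (mul_one _).symm, .inr (.inl ⟨by decide, rfl⟩)⟩

lemma sharkGT_two_mul (hn : 0 < n) (h : n ∉ ShSet none) : SharkGT n (2 * n) := by
  obtain ⟨c, d, hd, rfl⟩ := Nat.exists_eq_two_pow_mul_odd hn.ne'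
  have hd1 : d ≠ 1 := by
    rintro rfl
    exact h ⟨c, mul_one _⟩
  rw [← mul_assoc, ← pow_succ', sharkGT_two_pow_mul_iff hd hd]
  grind

lemma SharkGT.mem_shSet_none (h : SharkGT m n) (hm : m ∈ ShSet none) : n ∈ ShSet none := by
  obtain ⟨i, rfl⟩ := hm
  obtain ⟨a, b, c, d, hb, hd, hi, rfl, hcase⟩ := h
  obtain ⟨-, rfl⟩ := (two_pow_mul_odd_inj odd_one hb).1 (by rwa [mul_one])
  obtain rfl : d = 1 := by omega
  exact ⟨c, mul_one _⟩

lemma eq_shSet_some_of_maximal (hpos : ∀ n ∈ S, 0 < n)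
    (hclosed : ∀ m n, SharkGT m n → m ∈ S → n ∈ S) (hm : m ∈ S)
    (hmax : ∀ l ∈ S, ¬ SharkGT l m) : S = ShSet (some m) := by
  refine Subset.antisymm (fun l hl => ?_) (insert_subset hm fun l hl => hclosed m l hl hm)
  obtain h | rfl | h := sharkGT_trichotomy (hpos m hm) (hpos l hl)
  exacts [.inr h, .inl rfl, absurd h (hmax l hl)]

/- Among the numbers `2 ^ a * b` with odd `b ≠ 1` in `S`, take the one whose pair `(a, b)` is
lexicographically least. -/
lemma exists_maximal_of_notMem_shSet_none (hpos : ∀ n ∈ S, 0 < n) (hn : n ∈ S)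
    (hpow : n ∉ ShSet none) : ∃ m ∈ S, ∀ l ∈ S, ¬ SharkGT l m := by
  let T : Set (ℕ ×ₗ ℕ) := {p | Odd (ofLex p).2 ∧ (ofLex p).2 ≠ 1 ∧
    2 ^ (ofLex p).1 * (ofLex p).2 ∈ S}
  have hT : T.Nonempty := by
    obtain ⟨c, d, hd, rfl⟩ := Nat.exists_eq_two_pow_mul_odd (hpos n hn).ne'
    exact ⟨toLex (c, d), hd, fun (h : d = 1) => hpow ⟨c, by rw [h, mul_one]⟩, hn⟩
  obtain ⟨p, ⟨hb, hb1, hp⟩, hmin⟩ := wellFounded_lt.has_min T hT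
  refine ⟨_, hp, fun l hl hgt => ?_⟩
  obtain ⟨c, d, hd, rfl⟩ := Nat.exists_eq_two_pow_mul_odd (hpos l hl).ne'
  rw [sharkGT_two_pow_mul_iff hd hb] at hgt
  obtain ⟨hd1, -, hlt⟩ | ⟨-, h1⟩ | ⟨-, h1, -⟩ := hgt
  · exact hmin (toLex (c, d)) ⟨hd, hd1.ne', hl⟩ (Prod.Lex.lt_iff.2 hlt)
  all_goals exact hb1 h1

lemma shSet_none_subset_of_forall_exists_sharkGT (h1 : 1 ∈ S) (hS : S ⊆ ShSet none)
    (hclosed : ∀ m n, SharkGT m n → m ∈ S → n ∈ S) (hmax : ∀ m ∈ S, ∃ l ∈ S, SharkGT l m) :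
    ShSet none ⊆ S := by
  rintro _ ⟨j, rfl⟩
  induction j with
  | zero => simpa only [pow_zero] using h1
  | succ j ih =>
    obtain ⟨l, hl, hlj⟩ := hmax _ ih
    obtain ⟨i, rfl⟩ := hS hl
    obtain rfl | hij := (Nat.succ_le_of_lt (sharkGT_two_pow_iff.1 hlj)).eq_or_lt
    · exact hl
    · exact hclosed _ _ (sharkGT_two_pow_iff.2 hij) hl

theorem exists_eq_shSet (hpos : ∀ n ∈ S, 0 < n) (h1 : 1 ∈ S)
    (hclosed : ∀ m n, SharkGT m n → m ∈ S → n ∈ S) :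
    ∃ k : Option ℕ, (∀ j, k = some j → 0 < j) ∧ S = ShSet k := by
  by_cases hmax : ∃ m ∈ S, ∀ l ∈ S, ¬ SharkGT l m
  · obtain ⟨m, hm, hmax⟩ := hmax
    refine ⟨some m, ?_, eq_shSet_some_of_maximal hpos hclosed hm hmax⟩
    rintro _ ⟨⟩
    exact hpos m hm
  · have hS : S ⊆ ShSet none := fun n hn => by
      by_contra hpow
      exact hmax (exists_maximal_of_notMem_shSet_none hpos hn hpow)
    push Not at hmax
    exact ⟨none, by simp only [reduceCtorEq, false_imp_iff, implies_true],
      hS.antisymm (shSet_none_subset_of_forall_exists_sharkGT h1 hS hclosed hmax)⟩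

end SharkovskyOrder

section CycleConfig

variable {α : Type*} [LinearOrder α] {f : α → α} {m : ℕ} {a y v z : α}

/-- The configuration that a cycle of length `m ≥ 3` of a continuous map produces: `a` is the least
point of the cycle, `f v` is its preimage in the cycle, `z ∈ (v, f v)` is a fixed point, and `y` is
the last fixed point of `f ∘ f` in `(a, v)`. All periods that the cycle forces are found between
`a` and `z`. -/
structure IsCycleConfig (f : α → α) (m : ℕ) (a y v z : α) : Prop where
  lt_y : a < y
  y_lt_v : y < v
  v_lt_z : v < z
  map_z : f z = z
  map_map_y : f (f y) = y
  map_map_v : f (f v) = a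
  z_lt_map : ∀ x ∈ Icc y v, z < f x
  map_map_lt : ∀ x ∈ Ioc y v, f (f x) < x
  le_iterate : ∀ i, a ≤ f^[i] a
  isPeriodicPt : IsPeriodicPt f m a
  iterate_pred : f^[m - 1] a = f v

namespace IsCycleConfig

variable (h : IsCycleConfig f m a y v z)
include h

lemma lt_map_y : y < f y :=
  h.y_lt_v.trans (h.v_lt_z.trans (h.z_lt_map y (left_mem_Icc.2 h.y_lt_v.le)))

lemma two_mem_leastPeriods : 2 ∈ leastPeriods f := by
  refine mem_leastPeriods_iff.2 ⟨two_pos, y, h.map_map_y, fun j hj hj2 => ?_⟩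
  obtain rfl : j = 1 := by omega
  exact h.lt_map_y.ne'

lemma iterate_odd_y {k : ℕ} (hk : Odd k) : f^[k] y = f y := by
  obtain ⟨j, rfl⟩ := hk
  have hy : f^[2] y = y := h.map_map_y
  rw [add_comm, iterate_add_apply f 1, iterate_mul, iterate_fixed hy, iterate_one]

/- Otherwise the orbit of `a` under `f ∘ f` never passes `c`, although it contains
`f^[m - 1] a = f v > z`. -/
lemma exists_le_map_map (hm : Odd m) {c : α} (hc : c ∈ Ioc v z) (hfc : f (f c) = c)
    (hlt : ∀ x ∈ Ico v c, f (f x) < x) : ∃ x ∈ Icc a y, c ≤ f (f x) := by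
  by_contra! hcon
  have hmaps : ∀ x, a ≤ x → x ≤ c → f (f x) ≤ c := by
    intro x hax hxc
    obtain hxy | hyx := le_or_gt x y
    · exact (hcon x ⟨hax, hxy⟩).le
    obtain hxv | hvx := le_or_gt x v
    · exact ((h.map_map_lt x ⟨hyx, hxv⟩).trans_le hxc).le
    obtain rfl | hxc' := hxc.eq_or_lt
    · exact hfc.le
    · exact ((hlt x ⟨hvx.le, hxc'⟩).trans hxc').le
  have horbit : ∀ i, f^[2 * i] a ≤ c := by
    intro i
    induction i with
    | zero => exact ((h.lt_y.trans h.y_lt_v).trans hc.1).le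
    | succ i ih =>
      rw [Nat.mul_succ, add_comm, iterate_add_apply]
      exact hmaps _ (h.le_iterate _) ih
  obtain ⟨i, rfl⟩ := hm
  have hfv : f v ≤ c := h.iterate_pred ▸ horbit i
  exact (h.z_lt_map v (right_mem_Icc.2 h.y_lt_v.le)).not_ge (hfv.trans hc.2)

end IsCycleConfig

end CycleConfig

section LinearContinuum

variable {α : Type*} [ConditionallyCompleteLinearOrder α] [DenselyOrdered α] [TopologicalSpace α]
  [OrderTopology α]

section Crossing

variable {β : Type*} [LinearOrder β] [TopologicalSpace β] [OrderClosedTopology β]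
  {f g : α → β} {a b : α}

lemma exists_mem_Icc_eq (hf : Continuous f) (hg : Continuous g) (hab : a ≤ b)
    (ha : f a ≤ g a) (hb : g b ≤ f b) : ∃ c ∈ Icc a b, f c = g c :=
  isPreconnected_Icc.intermediate_value₂ (left_mem_Icc.2 hab) (right_mem_Icc.2 hab)
    hf.continuousOn hg.continuousOn ha hb

lemma exists_first_crossing (hf : Continuous f) (hg : Continuous g) (hab : a ≤ b)
    (ha : f a < g a) (hb : g b ≤ f b) :
    ∃ c ∈ Ioc a b, f c = g c ∧ ∀ x ∈ Ico a c, f x < g x := by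
  have hcompact : IsCompact (Icc a b ∩ {x | f x = g x}) :=
    isCompact_Icc.inter_right (isClosed_eq hf hg)
  obtain ⟨c, ⟨hc, hfgc⟩, hmin⟩ :=
    hcompact.exists_isLeast (exists_mem_Icc_eq hf hg hab ha.le hb)
  have hac : a < c := hc.1.lt_of_ne (by rintro rfl; exact ha.ne hfgc)
  refine ⟨c, ⟨hac, hc.2⟩, hfgc, fun x hx => ?_⟩
  by_contra! hle
  obtain ⟨w, hw, hfgw⟩ := exists_mem_Icc_eq hf hg hx.1 ha.le hle
  have hcw : c ≤ w := hmin ⟨⟨hw.1, (hw.2.trans hx.2.le).trans hc.2⟩, hfgw⟩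
  exact (hcw.trans hw.2).not_gt hx.2

lemma exists_last_crossing (hf : Continuous f) (hg : Continuous g) (hab : a ≤ b)
    (ha : g a ≤ f a) (hb : f b < g b) :
    ∃ c ∈ Ico a b, f c = g c ∧ ∀ x ∈ Ioc c b, f x < g x := by
  obtain ⟨c, hc, heq, hlt⟩ := exists_first_crossing (α := αᵒᵈ) (f := f ∘ OrderDual.ofDual)
    (g := g ∘ OrderDual.ofDual) (a := OrderDual.toDual b) hf hg hab hb ha
  exact ⟨c, hc.symm, heq, fun x hx => hlt x hx.symm⟩

lemma exists_Icc_mapsTo_Icc {p q : α} {r s : β} (hf : Continuous f) (hpq : p ≤ q) (hrs : r < s)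
    (hp : s ≤ f p) (hq : f q ≤ r) :
    ∃ p' q', p ≤ p' ∧ p' ≤ q' ∧ q' ≤ q ∧ f p' = s ∧ f q' = r ∧
      MapsTo f (Icc p' q') (Icc r s) := by
  obtain ⟨p', hp', hfp', hlt⟩ :=
    exists_last_crossing hf continuous_const hpq hp (hq.trans_lt hrs)
  obtain ⟨q', hq', hfq', hgt⟩ :=
    exists_first_crossing continuous_const hf hp'.2.le (hrs.trans_eq hfp'.symm) hq
  refine ⟨p', q', hp'.1, hq'.1.le, hq'.2, hfp', hfq'.symm, fun x hx => ⟨?_, ?_⟩⟩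
  · obtain rfl | hlt' := hx.2.eq_or_lt
    exacts [hfq'.le, (hgt x ⟨hx.1, hlt'⟩).le]
  · obtain rfl | hlt' := hx.1.eq_or_lt
    exacts [hfp'.le, (hlt x ⟨hlt', hx.2.trans hq'.2⟩).le]

end Crossing

section Cycles

variable {f : α → α} {m n : ℕ} {a y v z : α}

lemma exists_fixedPoint_of_cycle (hf : Continuous f) (hm : m ∈ leastPeriods f) :
    ∃ z, f z = z := by
  obtain ⟨a, ha, hle⟩ := exists_isLeast_cycle hm
  have hmap : f (f^[m - 1] a) = a := by
    rw [← iterate_succ_apply' f, Nat.succ_eq_add_one, Nat.sub_add_cancel hm.1, ← ha,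
      iterate_minimalPeriod]
  obtain ⟨z, -, hz⟩ := exists_mem_Icc_isFixedPt hf.continuousOn (hle (m - 1)) (hle 1)
    (hmap.trans_le (hle (m - 1)))
  exact ⟨z, hz⟩

lemma exists_preimage_of_le_iterate (hf : Continuous f) {b : α} (hab : a < b) (hfb : f b ≤ b)
    (hle : ∀ i, a ≤ f^[i] a) (hb : ∃ n, b ≤ f^[n] a) : ∃ v ∈ Icc a b, f v = b := by
  classical
  obtain ⟨j, hj⟩ : ∃ j, Nat.find hb = j + 1 := Nat.exists_eq_succ_of_ne_zero (by simpa using hab)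
  have hlt : f^[j] a < b := not_le.1 (Nat.find_min hb (by omega))
  have hbj : b ≤ f (f^[j] a) := by
    rw [← iterate_succ_apply' f, Nat.succ_eq_add_one, ← hj]
    exact Nat.find_spec hb
  obtain ⟨v, hv, hfv⟩ := exists_mem_Icc_eq continuous_const hf hlt.le hbj hfb
  exact ⟨v, ⟨(hle j).trans hv.1, hv.2⟩, hfv.symm⟩

lemma exists_last_fixedPoint_comp_self (hf : Continuous f) (hav : a < v) (hvz : v < z)
    (hz : f z = z) (hzv : z < f v) (hv : f (f v) = a) (ha : a < f (f a)) :
    ∃ y ∈ Ioo a v, f (f y) = y ∧ (∀ x ∈ Icc y v, z < f x) ∧ ∀ x ∈ Ioc y v, f (f x) < x := by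
  obtain ⟨y, ⟨hay, hyv⟩, hy, hlt⟩ :=
    exists_last_crossing (hf.comp hf) continuous_id hav.le ha.le (hv.trans_lt hav)
  simp only [comp_apply, id_eq] at hy hlt
  refine ⟨y, ⟨hay.lt_of_ne fun h => ha.ne' (h ▸ hy), hyv⟩, hy, fun x hx => ?_, hlt⟩
  by_contra! hle
  obtain ⟨w, hw, hfw⟩ := exists_mem_Icc_eq hf continuous_const hx.2 hle hzv.le
  have hwz : f (f w) = z := by rw [hfw, hz]
  have hw_lt : w < z := hw.2.trans_lt hvz
  obtain rfl | hyw := (hx.1.trans hw.1).eq_or_lt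
  · exact hw_lt.ne (hy.symm.trans hwz)
  · exact (hlt w ⟨hyw, hw.2⟩).not_gt (hwz ▸ hw_lt)

lemma exists_isCycleConfig (hf : Continuous f) (hm : 3 ≤ m) (hmem : m ∈ leastPeriods f) :
    ∃ a y v z, IsCycleConfig f m a y v z := by
  obtain ⟨a, ha, hle⟩ := exists_isLeast_cycle hmem
  have hper : IsPeriodicPt f m a := ha ▸ isPeriodicPt_minimalPeriod f a
  have hlt : ∀ i, 0 < i → i < m → a < f^[i] a := fun i hi him =>
    (hle i).lt_of_ne' (not_isPeriodicPt_of_pos_of_lt_minimalPeriod hi.ne' (ha ▸ him))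
  obtain ⟨b, hb⟩ : ∃ b, f^[m - 1] a = b := ⟨_, rfl⟩
  have hab : a < b := hb ▸ hlt _ (by omega) (by omega)
  have hfb : f b = a := by
    rw [← hb, ← iterate_succ_apply' f, Nat.succ_eq_add_one, Nat.sub_add_cancel (by omega)]
    exact hper
  obtain ⟨v, hv, hfv⟩ :=
    exists_preimage_of_le_iterate hf hab (hfb.trans_le hab.le) hle ⟨m - 1, hb.ge⟩
  have hffv : f (f v) = a := by rw [hfv, hfb]
  have haa : a < f (f a) := hlt 2 two_pos (by omega)
  have hav : a < v := hv.1.lt_of_ne fun h => haa.ne' (h ▸ hffv)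
  have hvb : v < b := hv.2.lt_of_ne fun h => hab.ne' (by rw [← hfv, h, hfb])
  obtain ⟨z, hz, hfz⟩ : ∃ z ∈ Icc v b, f z = z :=
    exists_mem_Icc_isFixedPt hf.continuousOn hvb.le (hfv ▸ hvb.le) (hfb ▸ hab.le)
  have hvz : v < z := hz.1.lt_of_ne fun h => hvb.ne (by rw [← hfv, h, hfz])
  have hzb : z < b := hz.2.lt_of_ne fun h => hab.ne (by rw [← hfb, ← h, hfz])
  obtain ⟨y, ⟨hay, hyv⟩, hy, hz_lt, hy_lt⟩ :=
    exists_last_fixedPoint_comp_self hf hav hvz hfz (hfv ▸ hzb) hffv haa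
  exact ⟨a, y, v, z, hay, hyv, hvz, hfz, hy, hffv, hz_lt, hy_lt, hle, hper, hb.trans hfv.symm⟩

/- The itinerary of a point that follows `[d, y] → [v, c] → ⋯ → [v, c] → [d, y]` under `g`. -/
lemma exists_itinerary_Icc {g : α → α} (hg : Continuous g) {d c : α} (hdy : d ≤ y)
    (hyv : y < v) (hvc : v < c) (hd : c ≤ g d) (hy : g y ≤ y) (hv : g v ≤ d) (hc : c ≤ g c)
    (k : ℕ) :
    ∃ p q, d ≤ p ∧ p ≤ q ∧ q ≤ y ∧ c ≤ g^[k + 1] p ∧ g^[k + 1] q ≤ q ∧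
      ∀ x ∈ Icc p q, ∀ i, 0 < i → i ≤ k → g^[i] x ∈ Icc v c := by
  induction k with
  | zero => exact ⟨d, y, le_rfl, hdy, le_rfl, hd, hy, fun x _ i hi hi0 => by omega⟩
  | succ k ih =>
    obtain ⟨p, q, hdp, hpq, hqy, hp, hq, hitin⟩ := ih
    obtain ⟨p', q', hp', hpq', hq', hgp', hgq', hmaps⟩ := exists_Icc_mapsTo_Icc
      (hg.iterate (k + 1)) hpq hvc hp (hq.trans (hqy.trans hyv.le))
    refine ⟨p', q', hdp.trans hp', hpq', hq'.trans hqy, ?_, ?_, fun x hx i hi hik => ?_⟩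
    · rwa [iterate_succ_apply', hgp']
    · rw [iterate_succ_apply', hgq']
      exact hv.trans (hdp.trans (hp'.trans hpq'))
    · obtain rfl | hlt := hik.eq_or_lt
      · exact hmaps hx
      · exact hitin x ⟨hp'.trans hx.1, hx.2.trans hq'⟩ i hi (Nat.lt_succ_iff.1 hlt)

namespace IsCycleConfig

variable (h : IsCycleConfig f m a y v z)
include h

lemma exists_lt_fixed_add_two (hf : Continuous f) {k : ℕ} (hk : Odd k) {x : α}
    (hx : x ∈ Ioc y v) (hfix : f^[k] x = x) : ∃ w ∈ Ioo y x, f^[k + 2] w = w := by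
  have hxlt : f^[k + 2] x < x := by
    rw [add_comm, iterate_add_apply, hfix]
    exact h.map_map_lt x hx
  have hylt : y < f^[k + 2] y := h.lt_map_y.trans_eq (h.iterate_odd_y (hk.add_even even_two)).symm
  obtain ⟨w, hw, hfw⟩ : ∃ w ∈ Icc y x, f^[k + 2] w = w :=
    exists_mem_Icc_isFixedPt (hf.iterate (k + 2)).continuousOn hx.1.le hylt.le hxlt.le
  exact ⟨w, ⟨hw.1.lt_of_ne fun e => hylt.ne' (e ▸ hfw),
    hw.2.lt_of_ne fun e => hxlt.ne (e ▸ hfw)⟩, hfw⟩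

lemma exists_lt_fixed_add_two_mul (hf : Continuous f) {k : ℕ} (hk : Odd k) {x : α}
    (hx : x ∈ Ioc y v) (hfix : f^[k] x = x) (j : ℕ) :
    ∃ w ∈ Ioo y x, f^[k + 2 * (j + 1)] w = w := by
  induction j with
  | zero => exact h.exists_lt_fixed_add_two hf hk hx hfix
  | succ j ih =>
    obtain ⟨w, hw, hfw⟩ := ih
    obtain ⟨u, hu, hfu⟩ := h.exists_lt_fixed_add_two hf (hk.add_even (even_two_mul _))
      ⟨hw.1, hw.2.le.trans hx.2⟩ hfw
    exact ⟨u, ⟨hu.1, hu.2.trans hw.2⟩, hfu⟩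

/- The first fixed point `p` of `f^[m + 2]` beyond `y` has least period `m + 2`: a smaller, still
odd, period would produce a fixed point of `f^[m + 2]` between `y` and `p`. -/
lemma add_two_mem_leastPeriods (hf : Continuous f) (hm : Odd m) : m + 2 ∈ leastPeriods f := by
  have hodd : Odd (m + 2) := hm.add_even even_two
  have hy : y < f^[m + 2] y := h.lt_map_y.trans_eq (h.iterate_odd_y hodd).symm
  have hv : f^[m + 2] v ≤ v := by
    calc f^[m + 2] v = f^[m] (f (f v)) := iterate_add_apply f m 2 v
      _ = a := by rw [h.map_map_v]; exact h.isPeriodicPt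
      _ ≤ v := (h.lt_y.trans h.y_lt_v).le
  obtain ⟨p, hp, hfp, hfirst⟩ :=
    exists_first_crossing continuous_id (hf.iterate (m + 2)) h.y_lt_v.le hy hv
  have hper : IsPeriodicPt f (m + 2) p := hfp.symm
  refine ⟨by omega, p, (hper.minimalPeriod_le (by omega)).eq_of_not_lt fun hlt => ?_⟩
  have hk : Odd (minimalPeriod f p) := hodd.of_dvd_nat hper.minimalPeriod_dvd
  obtain ⟨j, hj⟩ : ∃ j, minimalPeriod f p + 2 * (j + 1) = m + 2 := by
    obtain ⟨r, hr⟩ := hk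
    obtain ⟨s, hs⟩ := hodd
    exact ⟨s - r - 1, by omega⟩
  obtain ⟨w, hw, hfw⟩ := h.exists_lt_fixed_add_two_mul hf hk hp iterate_minimalPeriod j
  rw [hj] at hfw
  exact (hfirst w ⟨hw.1.le, hw.2⟩).ne hfw.symm

lemma exists_fixedPoint_comp_self_mem_Ioc (hf : Continuous f) :
    ∃ c ∈ Ioc v z, f (f c) = c ∧ (∀ x ∈ Ico v c, f (f x) < x) ∧ ∀ x ∈ Icc v c, z ≤ f x := by
  obtain ⟨c, hc, hfc, hlt⟩ := exists_first_crossing (hf.comp hf) continuous_id h.v_lt_z.le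
    (h.map_map_lt v (right_mem_Ioc.2 h.y_lt_v)) (by simp only [comp_apply, id_eq, h.map_z, le_refl])
  simp only [comp_apply, id_eq] at hfc hlt
  refine ⟨c, hc, hfc, hlt, fun x hx => ?_⟩
  by_contra! hfx
  obtain ⟨w, hw, hfw⟩ := exists_mem_Icc_eq continuous_const hf hx.1
    (h.z_lt_map v (right_mem_Icc.2 h.y_lt_v.le)).le hfx.le
  obtain rfl | hwc := (hw.2.trans hx.2).eq_or_lt
  · exact hfx.ne (by rw [hfw, hx.2.antisymm hw.2])
  · have hzw : f (f w) = z := by rw [← hfw, h.map_z]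
    exact (hlt w ⟨hw.1, hwc⟩).not_ge (hzw ▸ hwc.le.trans hc.2)

lemma exists_le_map_of_le_map_map (hf : Continuous f) {c : α} (hc : c ∈ Ioc v z)
    (hex : ∃ x ∈ Icc a y, c ≤ f (f x)) :
    ∃ d ∈ Ico a y, c ≤ f (f d) ∧ ∀ x ∈ Icc d y, z ≤ f x := by
  obtain ⟨x₀, hx₀, hcx₀⟩ := hex
  obtain ⟨d, hd, hfd, hlt⟩ := exists_last_crossing (hf.comp hf) continuous_const hx₀.2 hcx₀
    (h.map_map_y.trans_lt (h.y_lt_v.trans hc.1))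
  simp only [comp_apply] at hfd hlt
  refine ⟨d, ⟨hx₀.1.trans hd.1, hd.2⟩, hfd.ge, fun x hx => ?_⟩
  by_contra! hfx
  obtain ⟨w, hw, hfw⟩ := exists_mem_Icc_eq hf continuous_const hx.2 hfx.le
    (h.z_lt_map y (left_mem_Icc.2 h.y_lt_v.le)).le
  obtain rfl | hdw := (hx.1.trans hw.1).eq_or_lt
  · exact hfx.ne (by rw [← hfw, hx.1.antisymm hw.1])
  · have hzw : f (f w) = z := by rw [hfw, h.map_z]
    exact (hlt w ⟨hdw, hw.2⟩).not_ge (hzw ▸ hc.2)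

lemma two_mul_mem_leastPeriods (hf : Continuous f) (hm : Odd m) (hn : 0 < n) :
    2 * n ∈ leastPeriods f := by
  obtain ⟨c, hc, hfc, hlt, hz_right⟩ := h.exists_fixedPoint_comp_self_mem_Ioc hf
  obtain ⟨d, hd, hfd, hz_left⟩ :=
    h.exists_le_map_of_le_map_map hf hc (h.exists_le_map_map hm hc hfc hlt)
  have hfv : f (f v) ≤ d := h.map_map_v.trans_le hd.1
  obtain ⟨k, rfl⟩ : ∃ k, n = k + 1 := Nat.exists_eq_add_one.2 hn
  obtain ⟨p, q, hdp, hpq, hqy, hp, hq, hitin⟩ := exists_itinerary_Icc (g := f^[2])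
    (hf.iterate 2) hd.2.le h.y_lt_v hc.1 hfd h.map_map_y.le hfv hfc.ge k
  obtain ⟨x, hx, hfx⟩ := exists_mem_Icc_isFixedPt ((hf.iterate 2).iterate (k + 1)).continuousOn hpq
    ((hpq.trans (hqy.trans (h.y_lt_v.trans hc.1).le)).trans hp) hq
  have hxy : x ≤ y := hx.2.trans hqy
  refine mem_leastPeriods_iff.2
    ⟨by positivity, x, by rw [iterate_mul]; exact hfx, fun j hj hjk => ?_⟩
  obtain ⟨i, rfl | rfl⟩ := Nat.even_or_odd' j
  · rw [iterate_mul]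
    exact ((hxy.trans_lt h.y_lt_v).trans_le (hitin x hx i (by omega) (by omega)).1).ne'
  · have hz : z ≤ f ((f^[2])^[i] x) := by
      obtain rfl | hi := i.eq_zero_or_pos
      · exact hz_left x ⟨hdp.trans hx.1, hxy⟩
      · exact hz_right _ (hitin x hx i hi (by omega))
    rw [iterate_succ_apply', iterate_mul]
    exact (((hxy.trans_lt h.y_lt_v).trans h.v_lt_z).trans_le hz).ne'

end IsCycleConfig

end Cycles

section Forcing

/-- The forcing relation between periods: every continuous self-map of `α` with a point of least
period `m` has one of least period `n`. -/
def Forces (α : Type*) [TopologicalSpace α] (m n : ℕ) : Prop :=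
  ∀ f : α → α, Continuous f → m ∈ leastPeriods f → n ∈ leastPeriods f

variable {m n : ℕ}

lemma forces_one : Forces α m 1 := by
  intro f hf hm
  obtain ⟨z, hz⟩ := exists_fixedPoint_of_cycle hf hm
  exact ⟨one_pos, z, minimalPeriod_eq_one_iff_isFixedPt.2 hz⟩

lemma forces_two (hm : 3 ≤ m) : Forces α m 2 := by
  intro f hf hmem
  obtain ⟨a, y, v, z, h⟩ := exists_isCycleConfig hf hm hmem
  exact h.two_mem_leastPeriods

lemma forces_two_mul_of_odd (hm : Odd m) (h1 : m ≠ 1) (hn : 0 < n) : Forces α m (2 * n) := by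
  intro f hf hmem
  obtain ⟨a, y, v, z, h⟩ := exists_isCycleConfig hf (by grind) hmem
  exact h.two_mul_mem_leastPeriods hf hm hn

lemma forces_of_odd_of_le (hm : Odd m) (h1 : m ≠ 1) (hn : Odd n) (hmn : m ≤ n) : Forces α m n := by
  intro f hf hmem
  obtain ⟨k, rfl⟩ : ∃ k, n = m + 2 * k := by
    obtain ⟨k, hk⟩ := (Nat.Odd.sub_odd hn hm).two_dvd
    exact ⟨k, by omega⟩
  clear hn hmn
  induction k with
  | zero => exact hmem
  | succ k ih =>
    obtain ⟨a, y, v, z, h⟩ := exists_isCycleConfig hf (by grind) ih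
    exact h.add_two_mem_leastPeriods hf (hm.add_even (even_two_mul k))

lemma Forces.two_mul (h : Forces α m n) : Forces α (2 * m) (2 * n) := by
  intro f hf hm
  have hn := h _ (hf.iterate 2) (mem_leastPeriods_iterate_two hm)
  obtain hn | ⟨hodd, hn⟩ := two_mul_mem_or_odd_mem_of_mem_iterate_two hn
  · exact hn
  obtain rfl | hn1 := eq_or_ne n 1
  · obtain rfl | hm1 := eq_or_ne m 1
    · exact hm
    · have := hm.1
      exact forces_two (by omega) f hf hm
  · exact forces_two_mul_of_odd hodd hn1 hn.1 f hf hn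

lemma Forces.two_pow_mul (h : Forces α m n) (a : ℕ) : Forces α (2 ^ a * m) (2 ^ a * n) := by
  induction a with
  | zero => simpa only [pow_zero, one_mul] using h
  | succ a ih => simpa only [pow_succ', mul_assoc] using ih.two_mul

lemma forces_two_pow_of_dvd {c : ℕ} (h : 2 ^ c ∣ m) : Forces α m (2 ^ c) := by
  obtain ⟨k, rfl⟩ := h
  simpa only [mul_one] using (forces_one (m := k)).two_pow_mul c

lemma forces_two_pow_mul_of_odd (hm : Odd m) (h1 : m ≠ 1) (hn : 0 < n) {a c : ℕ} (hac : a < c) :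
    Forces α (2 ^ a * m) (2 ^ c * n) := by
  obtain ⟨e, rfl⟩ := Nat.exists_eq_add_of_lt hac
  have h := (forces_two_mul_of_odd (α := α) hm h1 (n := 2 ^ e * n) (by positivity)).two_pow_mul a
  convert h using 1
  ring

theorem SharkGT.forces (h : SharkGT m n) : Forces α m n := by
  obtain ⟨a, b, c, d, hb, hd, rfl, rfl, hcase⟩ := h
  obtain ⟨hb1, -, hac | ⟨rfl, hbd⟩⟩ | ⟨hb1, rfl⟩ | ⟨rfl, rfl, hca⟩ := hcase
  · exact forces_two_pow_mul_of_odd hb hb1.ne' hd.pos hac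
  · exact (forces_of_odd_of_le hb hb1.ne' hd hbd.le).two_pow_mul a
  · obtain hca | hac := le_or_gt c a
    · simpa only [mul_one] using forces_two_pow_of_dvd ((pow_dvd_pow 2 hca).mul_right b)
    · exact forces_two_pow_mul_of_odd hb hb1.ne' one_pos hac
  · simpa only [mul_one] using forces_two_pow_of_dvd (pow_dvd_pow 2 hca.le)

theorem exists_leastPeriods_eq_shSet {f : α → α} (hf : Continuous f)
    (hne : (leastPeriods f).Nonempty) :
    ∃ k : Option ℕ, (∀ j, k = some j → 0 < j) ∧ leastPeriods f = ShSet k := by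
  obtain ⟨m, hm⟩ := hne
  exact exists_eq_shSet (fun _ hn => hn.1) (forces_one f hf hm) fun _ _ h => h.forces f hf

end Forcing

section Truncation

/-- The truncation of a self-map at height `h`. -/
def truncate {α : Type*} [LinearOrder α] (g : α → α) (h x : α) : α := min h (g x)

/-- The greatest points of the cycles of `g` of length `m`. For `m = 0` these are instead the
aperiodic points that dominate their orbit. -/
def peaks {α : Type*} [LinearOrder α] (g : α → α) (m : ℕ) : Set α :=
  {x | minimalPeriod g x = m ∧ ∀ i, g^[i] x ≤ x}

section LinearOrder

variable {α : Type*} [LinearOrder α] {g : α → α} {h x : α} {m : ℕ}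

lemma iterate_truncate_of_forall_le (hle : ∀ i, g^[i] x ≤ h) (i : ℕ) :
    (truncate g h)^[i] x = g^[i] x := by
  induction i with
  | zero => rfl
  | succ i ih =>
    rw [iterate_succ_apply', ih, iterate_succ_apply']
    exact min_eq_right (iterate_succ_apply' g i x ▸ hle (i + 1))

lemma iterate_truncate_of_forall_lt (hlt : ∀ i, (truncate g h)^[i] x < h) (i : ℕ) :
    (truncate g h)^[i] x = g^[i] x := by
  induction i with
  | zero => rfl
  | succ i ih =>
    have hmin : min h (g (g^[i] x)) < h := by
      simpa only [iterate_succ_apply', ih, truncate] using hlt (i + 1)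
    rw [iterate_succ_apply', ih, iterate_succ_apply']
    exact min_eq_right ((min_lt_iff.1 hmin).resolve_left (lt_irrefl h)).le

lemma minimalPeriod_truncate_of_mem_peaks (hx : x ∈ peaks g m) (hxh : x ≤ h) :
    minimalPeriod (truncate g h) x = m :=
  (minimalPeriod_congr (iterate_truncate_of_forall_le fun i => (hx.2 i).trans hxh)).trans hx.1

lemma mem_leastPeriods_truncate (hm : 0 < m) (hx : x ∈ peaks g m) (hxh : x ≤ h) :
    m ∈ leastPeriods (truncate g h) :=
  ⟨hm, x, minimalPeriod_truncate_of_mem_peaks hx hxh⟩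

lemma exists_mem_peaks_of_mem_leastPeriods_truncate (hm : m ∈ leastPeriods (truncate g h)) :
    (∃ y ∈ peaks g m, y < h) ∨ minimalPeriod (truncate g h) h = m := by
  obtain ⟨a, ha, hmax⟩ := exists_isGreatest_cycle hm
  have hah : a ≤ h := by
    have hiter : (truncate g h)^[m - 1 + 1] a = a := by
      rw [Nat.sub_add_cancel hm.1, ← ha, iterate_minimalPeriod]
    rw [← hiter, iterate_succ_apply']
    exact min_le_left _ _
  obtain rfl | hlt := hah.eq_or_lt
  · exact .inr ha
  · have heq := iterate_truncate_of_forall_lt fun i => (hmax i).trans_lt hlt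
    exact .inl ⟨a, ⟨minimalPeriod_congr heq ▸ ha, fun i => heq i ▸ hmax i⟩, hlt⟩

lemma exists_isLeast_peaks (hfin : (ptsOfPeriod g m).Finite) (hm : m ∈ leastPeriods g) :
    ∃ x, IsLeast (peaks g m) x := by
  have hsub : peaks g m ⊆ ptsOfPeriod g m := fun x hx => hx.1 ▸ isPeriodicPt_minimalPeriod g x
  obtain ⟨x, hx, hmin⟩ := exists_min_image _ id (hfin.subset hsub) (exists_isGreatest_cycle hm)
  exact ⟨x, hx, hmin⟩

lemma continuous_truncate [TopologicalSpace α] [OrderClosedTopology α] (hg : Continuous g) (h : α) :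
    Continuous (truncate g h) :=
  continuous_const.min hg

end LinearOrder

variable {g : α → α} {h : α} {m l : ℕ}

lemma exists_mem_peaks_lt (hg : Continuous g) (hh : h ∈ peaks g m) (hml : SharkGT m l) :
    ∃ y ∈ peaks g l, y < h := by
  have hl := hml.forces _ (continuous_truncate hg h)
    (mem_leastPeriods_truncate hml.pos_left hh le_rfl)
  refine (exists_mem_peaks_of_mem_leastPeriods_truncate hl).resolve_right fun hper => ?_
  obtain rfl := (minimalPeriod_truncate_of_mem_peaks hh le_rfl).symm.trans hper
  exact SharkGT.irrefl m hml

lemma leastPeriods_truncate_of_isLeast (hg : Continuous g) (hm : 0 < m)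
    (hh : IsLeast (peaks g m) h) : leastPeriods (truncate g h) = ShSet (some m) := by
  have hmem : m ∈ leastPeriods (truncate g h) := mem_leastPeriods_truncate hm hh.1 le_rfl
  refine Subset.antisymm (fun l hl => ?_) (insert_subset hmem fun l hml =>
    SharkGT.forces hml _ (continuous_truncate hg h) hmem)
  obtain ⟨y, hy, hyh⟩ | hper := exists_mem_peaks_of_mem_leastPeriods_truncate hl
  · obtain hml | rfl | hlm := sharkGT_trichotomy hm hl.1
    · exact .inr hml
    · exact .inl rfl
    · obtain ⟨w, hw, hwy⟩ := exists_mem_peaks_lt hg hy hlm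
      exact absurd (hh.2 hw) (hwy.trans hyh).not_ge
  · exact .inl (hper.symm.trans (minimalPeriod_truncate_of_mem_peaks hh.1 le_rfl))

lemma mem_shSet_none_of_mem_peaks_of_lt_iSup (hg : Continuous g) {H : ℕ → α}
    (hH : ∀ j, IsLeast (peaks g (2 ^ j)) (H j)) (hl : 0 < l) {y : α} (hy : y ∈ peaks g l)
    (hlt : y < ⨆ j, H j) : l ∈ ShSet none := by
  obtain ⟨j, hj⟩ := exists_lt_of_lt_ciSup hlt
  have hmem : l ∈ leastPeriods (truncate g (H j)) := mem_leastPeriods_truncate hl hy hj.le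
  rw [leastPeriods_truncate_of_isLeast hg (by positivity) (hH j)] at hmem
  obtain rfl | hgt := hmem
  exacts [⟨j, rfl⟩, hgt.mem_shSet_none ⟨j, rfl⟩]

/- A period `l` that is not a power of two would force `2 * l`. Neither comes from a peak below
the supremum, so both would be the period of the truncation height itself. -/
lemma leastPeriods_truncate_iSup (hg : Continuous g) {H : ℕ → α}
    (hH : ∀ j, IsLeast (peaks g (2 ^ j)) (H j)) (hbdd : BddAbove (range H)) :
    leastPeriods (truncate g (⨆ j, H j)) = ShSet none := by
  refine Subset.antisymm (fun l hl => ?_) ?_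
  · by_contra hpow
    have hper {n : ℕ} (hn : n ∈ leastPeriods (truncate g (⨆ j, H j))) (hnpow : n ∉ ShSet none) :
        minimalPeriod (truncate g (⨆ j, H j)) (⨆ j, H j) = n :=
      (exists_mem_peaks_of_mem_leastPeriods_truncate hn).resolve_left fun ⟨_, hy, hlt⟩ =>
        hnpow (mem_shSet_none_of_mem_peaks_of_lt_iSup hg hH hn.1 hy hlt)
    have h2pow : 2 * l ∉ ShSet none := by
      rintro ⟨j, hj⟩
      obtain ⟨i, -, hi⟩ := (Nat.dvd_prime_pow Nat.prime_two).1 (hj ▸ dvd_mul_left l 2)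
      exact hpow ⟨i, hi⟩
    have h2l := (sharkGT_two_mul hl.1 hpow).forces _ (continuous_truncate hg _) hl
    have heq : l = 2 * l := (hper hl hpow).symm.trans (hper h2l h2pow)
    have hl_pos : 0 < l := hl.1
    omega
  · rintro _ ⟨j, rfl⟩
    exact mem_leastPeriods_truncate (by positivity) (hH j).1 (le_ciSup hbdd j)

theorem exists_leastPeriods_truncate_eq (hg : Continuous g)
    (hfin : ∀ n, 0 < n → (ptsOfPeriod g n).Finite) (h3 : 3 ∈ leastPeriods g) (k : Option ℕ)
    (hk : ∀ j, k = some j → 0 < j) : ∃ h, leastPeriods (truncate g h) = ShSet k := by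
  have hleast {n : ℕ} (hn : 0 < n) : ∃ x, IsLeast (peaks g n) x := by
    refine exists_isLeast_peaks (hfin n hn) ?_
    obtain rfl | h3n := eq_three_or_three_sharkGT hn
    exacts [h3, h3n.forces g hg h3]
  cases k with
  | none =>
    choose H hH using fun j => hleast (Nat.two_pow_pos j)
    obtain ⟨c, hc⟩ := exists_isGreatest_cycle h3
    have hbdd : BddAbove (range H) := by
      refine ⟨c, forall_mem_range.2 fun j => ?_⟩
      obtain ⟨y, hy, hyc⟩ := exists_mem_peaks_lt hg hc (three_sharkGT_two_pow j)
      exact ((hH j).2 hy).trans hyc.le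
    exact ⟨_, leastPeriods_truncate_iSup hg hH hbdd⟩
  | some m =>
    obtain ⟨h, hh⟩ := hleast (hk m rfl)
    exact ⟨h, leastPeriods_truncate_of_isLeast hg (hk m rfl) hh⟩

end Truncation

end LinearContinuum

section Tent

/-- The full tent map of `[0, 1]`, with slopes `2` and `-2`. -/
def tent (x : ℝ) : ℝ := 1 - |1 - 2 * x|

lemma continuous_tent : Continuous tent := by
  unfold tent
  fun_prop

lemma mapsTo_tent : MapsTo tent (Icc 0 1) (Icc 0 1) := by
  intro x hx
  have habs : |1 - 2 * x| ≤ 1 := abs_le.2 ⟨by linarith [hx.2], by linarith [hx.1]⟩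
  exact ⟨sub_nonneg.2 habs, sub_le_self _ (abs_nonneg _)⟩

lemma tent_eq_or (x : ℝ) : tent x = 2 * x ∨ tent x = 2 - 2 * x := by
  unfold tent
  obtain h | h := abs_choice (1 - 2 * x)
  · exact .inl (by rw [h]; ring)
  · exact .inr (by rw [h]; ring)

lemma exists_iterate_tent_eq (n : ℕ) (x : ℝ) :
    ∃ c : ℤ, tent^[n] x = c + 2 ^ n * x ∨ tent^[n] x = c - 2 ^ n * x := by
  induction n with
  | zero => exact ⟨0, .inl (by simp)⟩
  | succ n ih =>
    obtain ⟨c, hc⟩ := ih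
    rw [iterate_succ_apply']
    obtain h | h := tent_eq_or (tent^[n] x)
    · refine ⟨2 * c, hc.imp (fun hc => ?_) fun hc => ?_⟩ <;> rw [h, hc] <;> push_cast <;> ring
    · refine ⟨2 - 2 * c, hc.symm.imp (fun hc => ?_) fun hc => ?_⟩ <;> rw [h, hc] <;> push_cast <;>
        ring

lemma finite_setOf_mul_eq_intCast {s : Set ℝ} (hs : IsCompact s) {K : ℝ} (hK : K ≠ 0) :
    {x ∈ s | ∃ c : ℤ, K * x = c}.Finite := by
  have hfin : (((↑) : ℤ → ℝ) ⁻¹' ((K * ·) '' s)).Finite :=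
    (Int.isClosedEmbedding_coe_real.isCompact_preimage
      (hs.image (continuous_const_mul K))).finite_of_discrete
  refine (hfin.image fun c : ℤ => c / K).subset ?_
  rintro x ⟨hx, c, hc⟩
  exact ⟨c, ⟨x, hx, hc⟩, (div_eq_iff hK).2 (by rw [← hc, mul_comm])⟩

lemma finite_setOf_iterate_tent_eq {n : ℕ} (hn : 0 < n) :
    {x ∈ Icc (0 : ℝ) 1 | tent^[n] x = x}.Finite := by
  have hpow : (1 : ℝ) < 2 ^ n := one_lt_pow₀ one_lt_two hn.ne'
  have hfin {K : ℝ} (hK : K ≠ 0) : {x ∈ Icc (0 : ℝ) 1 | ∃ c : ℤ, K * x = c}.Finite :=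
    finite_setOf_mul_eq_intCast isCompact_Icc hK
  refine ((hfin (K := 2 ^ n - 1) (sub_ne_zero.2 hpow.ne')).union
    (hfin (K := 2 ^ n + 1) (by positivity))).subset ?_
  rintro x ⟨hx, hfix⟩
  obtain ⟨c, hc | hc⟩ := exists_iterate_tent_eq n x
  · exact .inl ⟨hx, -c, by push_cast; linarith⟩
  · exact .inr ⟨hx, c, by linarith⟩

lemma three_mem_perSet_tent : 3 ∈ PerSet tent := by
  have h1 : tent (2 / 7) = 4 / 7 := by norm_num [tent, abs_of_pos]
  have h2 : tent (4 / 7) = 6 / 7 := by norm_num [tent, abs_of_neg]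
  have h3 : tent (6 / 7) = 2 / 7 := by norm_num [tent, abs_of_neg]
  refine ⟨three_pos, 2 / 7, by norm_num, by simp [iterate_succ_apply, h1, h2, h3],
    fun j hj hj3 => ?_⟩
  interval_cases j
  · simp [h1]
  · simp [iterate_succ_apply, h1, h2]

lemma exists_mapsTo_perSet_eq (k : Option ℕ) (hk : ∀ j, k = some j → 0 < j) :
    ∃ f : ℝ → ℝ, Continuous f ∧ MapsTo f (Icc 0 1) (Icc 0 1) ∧ PerSet f = ShSet k := by
  have hfin (n : ℕ) (hn : 0 < n) : (ptsOfPeriod (mapsTo_tent.restrict tent _ _) n).Finite := by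
    refine ((finite_setOf_iterate_tent_eq hn).preimage Subtype.val_injective.injOn).subset ?_
    intro x hx
    refine ⟨x.2, ?_⟩
    rw [← mapsTo_tent.coe_iterate_restrict]
    exact congrArg Subtype.val hx
  have h3 := perSet_eq_leastPeriods_restrict mapsTo_tent ▸ three_mem_perSet_tent
  obtain ⟨h, hh⟩ := exists_leastPeriods_truncate_eq
    (continuous_tent.continuousOn.mapsToRestrict mapsTo_tent) hfin h3 k hk
  have hmaps : MapsTo (truncate tent h) (Icc 0 1) (Icc 0 1) := fun x hx =>
    ⟨le_min h.2.1 (mapsTo_tent hx).1, min_le_of_left_le h.2.2⟩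
  exact ⟨_, continuous_truncate continuous_tent h, hmaps,
    (perSet_eq_leastPeriods_restrict hmaps).trans hh⟩

end Tent

lemma mem_perSet_of_sharkGT {f : ℝ → ℝ} (hf : ContinuousOn f (Icc 0 1))
    (hmaps : MapsTo f (Icc 0 1) (Icc 0 1)) {m n : ℕ} (hmn : SharkGT m n) (hm : m ∈ PerSet f) :
    n ∈ PerSet f := by
  rw [perSet_eq_leastPeriods_restrict hmaps] at hm ⊢
  exact hmn.forces _ (hf.mapsToRestrict hmaps) hm

lemma one_mem_perSet {f : ℝ → ℝ} (hf : ContinuousOn f (Icc 0 1))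
    (hmaps : MapsTo f (Icc 0 1) (Icc 0 1)) : 1 ∈ PerSet f := by
  obtain ⟨x, hx, hfx⟩ := exists_mem_Icc_isFixedPt_of_mapsTo hf zero_le_one hmaps
  exact ⟨one_pos, x, hx, hfx, fun j _ _ => by omega⟩

/-- **Sharkovsky's theorem.**
(1) If `f : [0,1] → [0,1]` is continuous, `m ≻ n` in the Sharkovsky ordering and
`m ∈ Per(f)`, then `n ∈ Per(f)`.
(2) For every continuous `f : [0,1] → [0,1]` there is `k ∈ ℕ ∪ {2^∞}` with
`Per(f) = Sh(k)`.
(3) Conversely, for every `k ∈ ℕ ∪ {2^∞}` there is a continuous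
`f : [0,1] → [0,1]` with `Per(f) = Sh(k)`. -/
theorem sharkovsky :
    (∀ f : ℝ → ℝ, ContinuousOn f (Set.Icc 0 1) →
        MapsTo f (Set.Icc (0 : ℝ) 1) (Set.Icc (0 : ℝ) 1) →
        ∀ m n : ℕ, SharkGT m n → m ∈ PerSet f → n ∈ PerSet f) ∧
    (∀ f : ℝ → ℝ, ContinuousOn f (Set.Icc 0 1) →
        MapsTo f (Set.Icc (0 : ℝ) 1) (Set.Icc (0 : ℝ) 1) →
        ∃ k : Option ℕ, (∀ j : ℕ, k = some j → 0 < j) ∧ PerSet f = ShSet k) ∧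
    (∀ k : Option ℕ, (∀ j : ℕ, k = some j → 0 < j) →
        ∃ f : ℝ → ℝ, ContinuousOn f (Set.Icc 0 1) ∧
          MapsTo f (Set.Icc (0 : ℝ) 1) (Set.Icc (0 : ℝ) 1) ∧ PerSet f = ShSet k) := by
  refine ⟨fun f hf hmaps m n hmn hm => mem_perSet_of_sharkGT hf hmaps hmn hm,
    fun f hf hmaps => ?_, fun k hk => ?_⟩
  · have hne := perSet_eq_leastPeriods_restrict hmaps ▸ one_mem_perSet hf hmaps
    rw [perSet_eq_leastPeriods_restrict hmaps]
    exact exists_leastPeriods_eq_shSet (hf.mapsToRestrict hmaps) ⟨1, hne⟩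
  · obtain ⟨f, hf, hmaps, hper⟩ := exists_mapsTo_perSet_eq k hk
    exact ⟨f, hf.continuousOn, hmaps, hper⟩

end
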